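/- Let R be a right artinian ring and M a finitely generated right R-module. Then φ(M) ≤ φ(ΩM) + 1, where Ω denotes the syzygy. -/

import Mathlib

open Module Function

universe u

variable (R : Type u) [Ring R]

/-- A finitely generated right `R`-module, encoded as a module over `Rᵐᵒᵖ`. -/
structure FGMod where
  carrier : Type u
  [isAddCommGroup : AddCommGroup carrier]
  [isModule : Module Rᵐᵒᵖ carrier]
  [isFinite : Module.Finite Rᵐᵒᵖ carrier]

attribute [instance] FGMod.isAddCommGroup FGMod.isModule FGMod.isFinite

instance : CoeSort (FGMod R) (Type u) := ⟨FGMod.carrier⟩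

variable {R}

/-- Isomorphism of f.g. right modules. -/
def FGMod.Iso (M N : FGMod R) : Prop := Nonempty (M ≃ₗ[Rᵐᵒᵖ] N)

/-- Direct sum. -/
def FGMod.prod (M N : FGMod R) : FGMod R := ⟨M × N⟩

/-- `M^k`, the direct sum of `k` copies of `M`. -/
def FGMod.pow (M : FGMod R) (k : ℕ) : FGMod R := ⟨Fin k → M⟩

/-- `N` is (isomorphic to) a direct summand of `M`. -/
def FGMod.IsSummand (N M : FGMod R) : Prop :=
  ∃ A B : Submodule Rᵐᵒᵖ M, IsCompl A B ∧ Nonempty (N ≃ₗ[Rᵐᵒᵖ] A)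

/-- `M` is indecomposable. -/
def FGMod.Indec (M : FGMod R) : Prop :=
  Nontrivial M ∧ ∀ A B : Submodule Rᵐᵒᵖ M, IsCompl A B → A = ⊥ ∨ B = ⊥

/-- `M` is projective. -/
def FGMod.Proj (M : FGMod R) : Prop := Module.Projective Rᵐᵒᵖ M

/-- `f : P → M` is a projective cover: `P` projective, `f` surjective with superfluous kernel. -/
def IsProjCover (M P : FGMod R) (f : P →ₗ[Rᵐᵒᵖ] M) : Prop :=
  P.Proj ∧ Surjective f ∧ ∀ N : Submodule Rᵐᵒᵖ P, N ⊔ LinearMap.ker f = ⊤ → N = ⊤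

/-- `N` is a (first) syzygy of `M`: the kernel of a projective cover of `M`. -/
def IsSyzygy (M N : FGMod R) : Prop :=
  ∃ (P : FGMod R) (f : P →ₗ[Rᵐᵒᵖ] M),
    IsProjCover M P f ∧ Nonempty (N ≃ₗ[Rᵐᵒᵖ] LinearMap.ker f)

/-- `N` is an `n`-th syzygy of `M`. -/
def IsSyzygyN : ℕ → FGMod R → FGMod R → Prop
  | 0, M, N => M.Iso N
  | n+1, M, N => ∃ L, IsSyzygy M L ∧ IsSyzygyN n L N

/-- `M` has projective dimension at most `n`. -/
def HasPdLE : ℕ → FGMod R → Prop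
  | 0, M => M.Proj
  | n+1, M => M.Proj ∨ ∃ N, IsSyzygy M N ∧ HasPdLE n N

/-- `M` has finite projective dimension. -/
def FinPd (M : FGMod R) : Prop := ∃ n, HasPdLE n M

/-- The projective dimension of `M` (junk value if infinite). -/
noncomputable def pdIT (M : FGMod R) : ℕ := sInf {n | HasPdLE n M}

variable (R)

/-- The Igusa–Todorov relations in the free abelian group on f.g. right modules:
`[A] - [B] - [C]` whenever `A ≅ B ⊕ C`, and `[P]` for `P` projective. -/
def ITRel : Set (FreeAbelianGroup (FGMod R)) :=
  {x | ∃ A B C : FGMod R, Nonempty (A ≃ₗ[Rᵐᵒᵖ] (B × C : Type u)) ∧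
        x = FreeAbelianGroup.of A - FreeAbelianGroup.of B - FreeAbelianGroup.of C} ∪
  {x | ∃ P : FGMod R, P.Proj ∧ x = FreeAbelianGroup.of P}

/-- The Igusa–Todorov group `K`. -/
def ITK := FreeAbelianGroup (FGMod R) ⧸ AddSubgroup.closure (ITRel R)

noncomputable instance : AddCommGroup (ITK R) :=
  QuotientAddGroup.Quotient.addCommGroup _

/-- The class `[M]` in `K`. -/
noncomputable def ITcls (M : FGMod R) : ITK R := QuotientAddGroup.mk (FreeAbelianGroup.of M)

/-- `⟨M⟩`: the subgroup of `K` generated by the indecomposable non-projective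
direct summands of `M`. -/
noncomputable def ITgen (M : FGMod R) : AddSubgroup (ITK R) :=
  AddSubgroup.closure
    {x | ∃ N : FGMod R, N.IsSummand M ∧ N.Indec ∧ ¬N.Proj ∧ x = ITcls R N}

/-- The rank of a subgroup of `K`. -/
noncomputable def rkIT (H : AddSubgroup (ITK R)) : ℕ :=
  Module.finrank ℤ (AddSubgroup.toIntSubmodule H)

/-- `OmK` is a syzygy endomorphism of `K`: a group endomorphism sending `[M]` to `[ΩM]`. -/
def IsSyzygyEnd (OmK : AddMonoid.End (ITK R)) : Prop :=
  ∀ M N : FGMod R, IsSyzygy M N → OmK (ITcls R M) = ITcls R N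

/-- The Igusa–Todorov function `φ`: the least `n` such that the rank of
`Ω^i⟨M⟩` equals that of `Ω^n⟨M⟩` for all `i ≥ n`. -/
noncomputable def phiIT (OmK : AddMonoid.End (ITK R)) (M : FGMod R) : ℕ :=
  sInf {n | ∀ i, n ≤ i →
    rkIT R ((ITgen R M).map ((OmK ^ i : AddMonoid.End (ITK R)) : ITK R →+ ITK R))
      = rkIT R ((ITgen R M).map ((OmK ^ n : AddMonoid.End (ITK R)) : ITK R →+ ITK R))}

/-- The second Igusa–Todorov function `ψ`. -/
noncomputable def psiIT (OmK : AddMonoid.End (ITK R)) (M : FGMod R) : ℕ :=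
  phiIT R OmK M + sSup {d | ∃ N X : FGMod R, IsSyzygyN (phiIT R OmK M) M N ∧
      X.IsSummand N ∧ FinPd X ∧ d = pdIT X}

/-- The socle of a module: the sum of its simple submodules. -/
def socleIT (M : FGMod R) : Submodule Rᵐᵒᵖ M :=
  sSup {S : Submodule Rᵐᵒᵖ M | IsSimpleModule Rᵐᵒᵖ S}

/-!
If `X` is a direct summand of `M`, comparing projective covers makes `ΩX` a direct summand of `ΩM`,
so `Ω⟨M⟩ ≤ ⟨ΩM⟩`. Indecomposables have local endomorphism rings by Fitting's lemma, so by
Krull–Schmidt `⟨ΩM⟩` is generated by finitely many classes and its rank is finite. Let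
`n = φ(ΩM)`. For every `c` the map `Ω^c` preserves the rank of `Ω^n⟨ΩM⟩`, which by rank–nullity
means that its kernel there has rank `0`. Hence `Ω^c` preserves the rank of every subgroup of
`Ω^n⟨ΩM⟩`, in particular of `Ω^(n+1)⟨M⟩`.
-/

universe v

section Rank

variable {S : Type*} [Ring S] {G : Type v} [AddCommGroup G] [Module S G]

theorem finrank_map_add_finrank_inf_ker [StrongRankCondition S] [HasRankNullity.{v} S]
    {H : Type*} [AddCommGroup H] [Module S H] (g : G →ₗ[S] H) (A : Submodule S G)
    [Module.Finite S A] :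
    finrank S (A.map g) + finrank S (A ⊓ LinearMap.ker g : Submodule S G) = finrank S A := by
  rw [← LinearMap.range_domRestrict, ← (g.domRestrict A).quotKerEquivRange.finrank_eq,
    ← Submodule.map_comap_subtype, Submodule.finrank_map_subtype_eq]
  exact Submodule.finrank_quotient_add_finrank _

theorem finrank_map_eq_of_le [StrongRankCondition S] [HasRankNullity.{v} S]
    {H : Type*} [AddCommGroup H] [Module S H] {A B : Submodule S G} [IsNoetherian S B]
    (hAB : A ≤ B) (g : G →ₗ[S] H) (hB : finrank S (B.map g) = finrank S B) :
    finrank S (A.map g) = finrank S A := by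
  have : IsNoetherian S A := isNoetherian_of_le hAB
  have : IsNoetherian S (B ⊓ LinearMap.ker g : Submodule S G) := isNoetherian_of_le inf_le_left
  have ker_le := Submodule.finrank_mono (inf_le_inf_right (LinearMap.ker g) hAB)
  have := finrank_map_add_finrank_inf_ker g A
  have := finrank_map_add_finrank_inf_ker g B
  lia

/-- The rank of `A.map (f ^ i)` is constant for `i ≥ n`. The Igusa–Todorov number `φ(M)` is the
least such `n` for `f = Ω` and `A = ⟨M⟩`. -/
def RankStableFrom (f : Module.End S G) (A : Submodule S G) (n : ℕ) : Prop :=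
  ∀ i, n ≤ i → finrank S (A.map (f ^ i)) = finrank S (A.map (f ^ n))

theorem map_pow_add (f : Module.End S G) (A : Submodule S G) (m n : ℕ) :
    A.map (f ^ (m + n)) = (A.map (f ^ n)).map (f ^ m) := by
  rw [pow_add, Module.End.mul_eq_comp, Submodule.map_comp]

theorem exists_rankStableFrom [StrongRankCondition S] (f : Module.End S G) (A : Submodule S G)
    [Module.Finite S A] : ∃ n, RankStableFrom f A n := by
  let rank (n : ℕ) : ℕ := finrank S (A.map (f ^ n))
  have rank_antitone : Antitone rank := antitone_nat_of_succ_le fun n => by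
    simp only [rank]
    rw [add_comm, map_pow_add]
    exact Submodule.finrank_map_le _ _
  exact ⟨argmin rank, fun i hi => (rank_antitone hi).antisymm (argmin_le rank i)⟩

namespace RankStableFrom

variable {f : Module.End S G} {A B : Submodule S G} {n : ℕ}

theorem of_map (h : RankStableFrom f (A.map f) n) : RankStableFrom f A (n + 1) := by
  intro i hi
  obtain ⟨j, rfl⟩ := Nat.exists_eq_add_of_le' hi
  rw [← add_assoc, map_pow_add f A (j + n) 1, map_pow_add f A n 1, pow_one]
  exact h (j + n) (by lia)

theorem anti [StrongRankCondition S] [HasRankNullity.{v} S] [IsNoetherian S B]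
    (h : RankStableFrom f B n) (hAB : A ≤ B) : RankStableFrom f A n := by
  intro i hi
  obtain ⟨j, rfl⟩ := Nat.exists_eq_add_of_le' hi
  rw [map_pow_add]
  refine finrank_map_eq_of_le (Submodule.map_mono hAB) (f ^ j) ?_
  rw [← map_pow_add]
  exact h _ hi

end RankStableFrom

end Rank

section Retract

/-- `X` is a retract of `M`: the identity of `X` factors through `M`. For modules this means
being isomorphic to a direct summand, but retractions compose and restrict without any
reference to complements. -/
def IsRetract (S X M : Type*) [Semiring S] [AddCommMonoid X] [AddCommMonoid M] [Module S X]
    [Module S M] : Prop :=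
  ∃ (i : X →ₗ[S] M) (p : M →ₗ[S] X), p ∘ₗ i = LinearMap.id

namespace IsRetract

variable {S : Type*} [Semiring S] {X M N : Type*} [AddCommMonoid X] [AddCommMonoid M]
  [AddCommMonoid N] [Module S X] [Module S M] [Module S N]

theorem trans (hXM : IsRetract S X M) (hMN : IsRetract S M N) : IsRetract S X N := by
  obtain ⟨i, p, hpi⟩ := hXM
  obtain ⟨j, q, hqj⟩ := hMN
  exact ⟨j ∘ₗ i, p ∘ₗ q, by rw [LinearMap.comp_assoc, ← LinearMap.comp_assoc i, hqj,
    LinearMap.id_comp, hpi]⟩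

theorem of_linearEquiv (e : X ≃ₗ[S] M) : IsRetract S X M :=
  ⟨e, e.symm, e.symm_comp⟩

theorem prod_left : IsRetract S M (M × N) :=
  ⟨LinearMap.inl S M N, LinearMap.fst S M N, LinearMap.fst_comp_inl S M N⟩

theorem prod_right : IsRetract S N (M × N) :=
  ⟨LinearMap.inr S M N, LinearMap.snd S M N, LinearMap.snd_comp_inr S M N⟩

theorem nontrivial [Nontrivial X] (h : IsRetract S X M) : Nontrivial M := by
  obtain ⟨i, p, hpi⟩ := h
  exact (LinearMap.injective_of_comp_eq_id i p hpi).nontrivial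

theorem of_isUnit_comp {i : X →ₗ[S] M} {p : M →ₗ[S] X}
    (h : IsUnit (p ∘ₗ i : Module.End S X)) : IsRetract S X M := by
  obtain ⟨u, hu⟩ := h.exists_left_inv
  exact ⟨i, u ∘ₗ p, hu⟩

theorem of_prod [IsLocalRing (Module.End S X)] (h : IsRetract S X (M × N)) :
    IsRetract S X M ∨ IsRetract S X N := by
  obtain ⟨i, p, hpi⟩ := h
  have sum_eq_one : ((p ∘ₗ LinearMap.inl S M N) ∘ₗ (LinearMap.fst S M N ∘ₗ i) : Module.End S X) +
      (p ∘ₗ LinearMap.inr S M N) ∘ₗ (LinearMap.snd S M N ∘ₗ i) = 1 := by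
    ext x
    simpa [← map_add] using LinearMap.congr_fun hpi x
  exact (IsLocalRing.isUnit_or_isUnit_of_add_one sum_eq_one).imp of_isUnit_comp of_isUnit_comp

end IsRetract

end Retract

section LocalEnd

variable {S X : Type*} [Ring S] [AddCommGroup X] [Module S X]

theorem isLocalRing_end_of_indecomposable [Nontrivial X] [IsArtinian S X] [IsNoetherian S X]
    (h : ∀ A B : Submodule S X, IsCompl A B → A = ⊥ ∨ B = ⊥) : IsLocalRing (Module.End S X) := by
  refine IsLocalRing.of_isUnit_or_isUnit_one_sub_self fun f => ?_
  obtain ⟨n, fitting, hn⟩ := (f.eventually_isCompl_ker_pow_range_pow.and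
    (Filter.eventually_ne_atTop 0)).exists
  rcases h _ _ fitting with ker_eq_bot | range_eq_bot
  · left
    rw [← isUnit_pow_iff hn, Module.End.isUnit_iff]
    exact IsArtinian.bijective_of_injective_endomorphism _ (LinearMap.ker_eq_bot.mp ker_eq_bot)
  · right
    exact IsNilpotent.isUnit_one_sub ⟨n, LinearMap.range_eq_bot.mp range_eq_bot⟩

end LocalEnd

section ProjectiveCover

variable {S : Type*} [Ring S] {P Q M X : Type*} [AddCommGroup P] [AddCommGroup Q]
  [AddCommGroup M] [AddCommGroup X] [Module S P] [Module S Q] [Module S M] [Module S X]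

/-- A superfluous (small) submodule: it can be dropped from any sum that is the whole module.
A surjection from a projective module is a projective cover when its kernel is superfluous. -/
def IsSuperfluous (K : Submodule S P) : Prop :=
  ∀ N : Submodule S P, N ⊔ K = ⊤ → N = ⊤

theorem range_sup_ker_eq_top_of_surjective_comp {f : P →ₗ[S] M} {h : X →ₗ[S] P}
    (hfh : Surjective (f ∘ₗ h)) : LinearMap.range h ⊔ LinearMap.ker f = ⊤ := by
  have hf : Surjective f := Surjective.of_comp hfh
  rw [← LinearMap.map_eq_top_iff (LinearMap.range_eq_top.mpr hf), ← LinearMap.range_comp]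
  exact LinearMap.range_eq_top.mpr hfh

theorem IsSuperfluous.surjective_of_comp {f : P →ₗ[S] M} (hker : IsSuperfluous (LinearMap.ker f))
    {h : X →ₗ[S] P} (hfh : Surjective (f ∘ₗ h)) : Surjective h :=
  LinearMap.range_eq_top.mp (hker _ (range_sup_ker_eq_top_of_surjective_comp hfh))

theorem IsSuperfluous.bijective_of_comp_eq [Module.Projective S P] {f : P →ₗ[S] M}
    (hf : Surjective f) (hker : IsSuperfluous (LinearMap.ker f)) {h : Module.End S P}
    (hfh : f ∘ₗ h = f) : Bijective h := by
  have h_surj : Surjective h := hker.surjective_of_comp (by rwa [hfh])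
  -- A section of `h` is itself an endomorphism over `f`, hence also surjective.
  obtain ⟨s, hs⟩ := Module.projective_lifting_property h LinearMap.id h_surj
  have hfs : f ∘ₗ s = f := by rw [← hfh, LinearMap.comp_assoc, hs, LinearMap.comp_id, hfh]
  have s_surj : Surjective s := hker.surjective_of_comp (by rwa [hfs])
  have left_inv : LeftInverse h s := LinearMap.congr_fun hs
  exact ⟨(left_inv.rightInverse_of_surjective s_surj).injective, h_surj⟩

theorem isSuperfluous_ker_of_forall_isCompl [Module.Projective S P] [IsArtinian S P]
    [IsNoetherian S P] {f : P →ₗ[S] M} (hf : Surjective f)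
    (hmin : ∀ A B : Submodule S P, IsCompl A B → A ⊔ LinearMap.ker f = ⊤ → A = ⊤) :
    IsSuperfluous (LinearMap.ker f) := by
  intro N hN
  have f_surj_on_N : Surjective (f ∘ₗ N.subtype) :=
    (LinearMap.surjective_domRestrict_iff hf).mpr (codisjoint_iff.mpr hN)
  obtain ⟨g, hg⟩ := Module.projective_lifting_property (f ∘ₗ N.subtype) f f_surj_on_N
  -- By Fitting's lemma, some power of `h` has as its image a direct summand of `P` inside `N`.
  let h : Module.End S P := N.subtype ∘ₗ g
  have comp_pow (n : ℕ) : f ∘ₗ (h ^ n) = f := by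
    induction n with
    | zero => rfl
    | succ n ih => rw [pow_succ, Module.End.mul_eq_comp, ← LinearMap.comp_assoc, ih]; exact hg
  obtain ⟨n, fitting, hn⟩ := (h.eventually_isCompl_ker_pow_range_pow.and
    (Filter.eventually_ne_atTop 0)).exists
  have range_eq_top : LinearMap.range (h ^ n) = ⊤ :=
    hmin _ _ fitting.symm (range_sup_ker_eq_top_of_surjective_comp (by rwa [comp_pow]))
  have range_le : LinearMap.range (h ^ n) ≤ N := by
    obtain ⟨m, rfl⟩ := Nat.exists_eq_succ_of_ne_zero hn
    rw [pow_succ']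
    rintro _ ⟨x, rfl⟩
    exact (g ((h ^ m) x)).2
  exact top_le_iff.mp (range_eq_top ▸ range_le)

theorem IsRetract.ker [Module.Projective S P] [Module.Projective S Q] {f : P →ₗ[S] M}
    {q : Q →ₗ[S] X} (hf : Surjective f) (hq : Surjective q)
    (hker : IsSuperfluous (LinearMap.ker q)) (h : IsRetract S X M) :
    IsRetract S (LinearMap.ker q) (LinearMap.ker f) := by
  obtain ⟨i, p, hpi⟩ := h
  obtain ⟨a, ha⟩ := Module.projective_lifting_property f (i ∘ₗ q) hf
  obtain ⟨b, hb⟩ := Module.projective_lifting_property q (p ∘ₗ f) hq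
  have over_q : q ∘ₗ (b ∘ₗ a) = q := by
    rw [← LinearMap.comp_assoc, hb, LinearMap.comp_assoc, ha, ← LinearMap.comp_assoc, hpi,
      LinearMap.id_comp]
  let e : Q ≃ₗ[S] Q := LinearEquiv.ofBijective _ (hker.bijective_of_comp_eq hq over_q)
  have a_mem : ∀ x ∈ LinearMap.ker q, a x ∈ LinearMap.ker f := by
    intro x hx
    have : f (a x) = i (q x) := LinearMap.congr_fun ha x
    rw [LinearMap.mem_ker, this, hx, map_zero]
  have b_mem : ∀ y ∈ LinearMap.ker f, (e.symm.toLinearMap ∘ₗ b) y ∈ LinearMap.ker q := by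
    intro y hy
    have hqe : q (e (e.symm (b y))) = q (e.symm (b y)) := LinearMap.congr_fun over_q _
    have hqb : q (b y) = p (f y) := LinearMap.congr_fun hb y
    rw [LinearMap.mem_ker, LinearMap.comp_apply, LinearEquiv.coe_coe, ← hqe, e.apply_symm_apply,
      hqb, hy, map_zero]
  exact ⟨a.restrict a_mem, (e.symm.toLinearMap ∘ₗ b).restrict b_mem,
    LinearMap.ext fun x => Subtype.ext (e.symm_apply_apply x)⟩

end ProjectiveCover

section FinitelyGenerated

variable {R}

namespace FGMod

theorem isSummand_iff_isRetract {X M : FGMod R} : X.IsSummand M ↔ IsRetract Rᵐᵒᵖ X M := by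
  constructor
  · rintro ⟨A, B, hAB, ⟨e⟩⟩
    exact (IsRetract.of_linearEquiv e).trans
      ⟨A.subtype, A.projectionOnto B hAB, A.projectionOnto_comp_subtype hAB⟩
  · rintro ⟨i, p, hpi⟩
    refine ⟨LinearMap.range i, LinearMap.ker (i.rangeRestrict ∘ₗ p), LinearMap.isCompl_of_proj ?_,
      ⟨LinearEquiv.ofInjective i (LinearMap.injective_of_comp_eq_id i p hpi)⟩⟩
    rintro ⟨_, x, rfl⟩
    exact congrArg i.rangeRestrict (LinearMap.congr_fun hpi x)

theorem proj_of_subsingleton (M : FGMod R) [Subsingleton M] : M.Proj :=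
  inferInstanceAs (Module.Projective Rᵐᵒᵖ M)

theorem IsSummand.nonempty_linearEquiv_of_indec {X M : FGMod R} (h : X.IsSummand M)
    (hX : Nontrivial X) (hM : M.Indec) : Nonempty (X ≃ₗ[Rᵐᵒᵖ] M) := by
  obtain ⟨A, B, hAB, ⟨e⟩⟩ := h
  rcases hM.2 A B hAB with rfl | rfl
  · exact absurd e.injective.subsingleton (not_subsingleton X)
  · exact ⟨e ≪≫ₗ LinearEquiv.ofTop A (eq_top_of_isCompl_bot hAB)⟩

theorem exists_isCompl_ne_top_of_not_indec {M : FGMod R} [Nontrivial M] (hM : ¬ M.Indec) :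
    ∃ A B : Submodule Rᵐᵒᵖ M, IsCompl A B ∧ A ≠ ⊤ ∧ B ≠ ⊤ := by
  by_contra! h
  refine hM ⟨‹_›, fun A B hAB => or_iff_not_imp_right.mpr fun hB => ?_⟩
  have hA : A ≠ ⊤ := by
    rintro rfl
    exact hB (eq_bot_of_top_isCompl hAB)
  exact eq_bot_of_isCompl_top (h A B hAB hA ▸ hAB)

variable [IsArtinianRing Rᵐᵒᵖ]

theorem Indec.isLocalRing_end {X : FGMod R} (hX : X.Indec) : IsLocalRing (Module.End Rᵐᵒᵖ X) :=
  have := hX.1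
  isLocalRing_end_of_indecomposable hX.2

@[elab_as_elim]
theorem induction_indec {motive : FGMod R → Prop} (M : FGMod R)
    (subsingleton : ∀ M : FGMod R, Subsingleton M → motive M)
    (indec : ∀ M : FGMod R, M.Indec → motive M)
    (prod : ∀ M A B : FGMod R, (M ≃ₗ[Rᵐᵒᵖ] A × B) → motive A → motive B → motive M) :
    motive M := by
  induction hl : Module.length Rᵐᵒᵖ M using WellFoundedLT.induction generalizing M with
  | ind l ih =>
    subst hl
    rcases subsingleton_or_nontrivial M with hM | hM
    · exact subsingleton M hM
    by_cases hM : M.Indec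
    · exact indec M hM
    obtain ⟨A, B, hAB, hA, hB⟩ := exists_isCompl_ne_top_of_not_indec hM
    exact prod M ⟨A⟩ ⟨B⟩ (Submodule.prodEquivOfIsCompl A B hAB).symm
      (ih _ (Submodule.length_lt hA) ⟨A⟩ rfl) (ih _ (Submodule.length_lt hB) ⟨B⟩ rfl)

theorem exists_isProjCover (M : FGMod R) :
    ∃ (P : FGMod R) (f : P →ₗ[Rᵐᵒᵖ] M), IsProjCover M P f := by
  obtain ⟨n, π, hπ⟩ := Module.Finite.exists_fin' Rᵐᵒᵖ M
  obtain ⟨P, ⟨hP, f, hf⟩, hmin⟩ := exists_minimalFor_of_wellFoundedLT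
    (fun P : FGMod R => P.Proj ∧ ∃ f : P →ₗ[Rᵐᵒᵖ] M, Surjective f)
    (fun P => Module.length Rᵐᵒᵖ P)
    ⟨⟨Fin n → Rᵐᵒᵖ⟩, inferInstanceAs (Module.Projective Rᵐᵒᵖ (Fin n → Rᵐᵒᵖ)), π, hπ⟩
  have : Module.Projective Rᵐᵒᵖ P := hP
  refine ⟨P, f, hP, hf, isSuperfluous_ker_of_forall_isCompl hf fun A B hAB hA => ?_⟩
  by_contra A_ne_top
  have A_proj : Module.Projective Rᵐᵒᵖ A := .of_split A.subtype (A.projectionOnto B hAB)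
    (A.projectionOnto_comp_subtype hAB)
  have f_surj_on_A : Surjective (f.domRestrict A) :=
    (LinearMap.surjective_domRestrict_iff hf).mpr (codisjoint_iff.mpr hA)
  have A_length_lt := Submodule.length_lt A_ne_top
  exact A_length_lt.not_ge (hmin (j := ⟨A⟩) ⟨A_proj, _, f_surj_on_A⟩ A_length_lt.le)

theorem IsSummand.exists_isSyzygy {X M N : FGMod R} (hX : X.IsSummand M) (hN : IsSyzygy M N) :
    ∃ Y : FGMod R, IsSyzygy X Y ∧ Y.IsSummand N := by
  obtain ⟨P, f, ⟨hP, hf, -⟩, ⟨e⟩⟩ := hN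
  obtain ⟨Q, q, hQ, hq, hker⟩ := exists_isProjCover X
  have : Module.Projective Rᵐᵒᵖ P := hP
  have : Module.Projective Rᵐᵒᵖ Q := hQ
  refine ⟨⟨LinearMap.ker q⟩, ⟨Q, q, ⟨hQ, hq, hker⟩, ⟨LinearEquiv.refl _ _⟩⟩, ?_⟩
  exact isSummand_iff_isRetract.mpr <|
    ((isSummand_iff_isRetract.mp hX).ker hf hq hker).trans (.of_linearEquiv e.symm)

end FGMod

end FinitelyGenerated

section IgusaTodorovGroup

variable {R}

theorem ITcls_eq_add {M A B : FGMod R} (e : M ≃ₗ[Rᵐᵒᵖ] A × B) :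
    ITcls R M = ITcls R A + ITcls R B := by
  have : ITcls R M - ITcls R A - ITcls R B = 0 :=
    (QuotientAddGroup.eq_zero_iff _).mpr
      (AddSubgroup.subset_closure (Or.inl ⟨M, A, B, ⟨e⟩, rfl⟩))
  rwa [sub_sub, sub_eq_zero] at this

theorem ITcls_eq_zero_of_proj {P : FGMod R} (hP : P.Proj) : ITcls R P = 0 :=
  (QuotientAddGroup.eq_zero_iff _).mpr (AddSubgroup.subset_closure (Or.inr ⟨P, hP, rfl⟩))

theorem ITcls_congr {M N : FGMod R} (e : M ≃ₗ[Rᵐᵒᵖ] N) : ITcls R M = ITcls R N := by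
  let zero : FGMod R := ⟨PUnit⟩
  have : Unique zero := inferInstanceAs (Unique PUnit)
  rw [ITcls_eq_add (B := zero) (e ≪≫ₗ LinearEquiv.prodUnique.symm),
    ITcls_eq_zero_of_proj zero.proj_of_subsingleton, add_zero]

theorem ITgen_mono {M N : FGMod R} (h : IsRetract Rᵐᵒᵖ M N) : ITgen R M ≤ ITgen R N := by
  refine AddSubgroup.closure_mono ?_
  rintro _ ⟨X, hX, hind, hproj, rfl⟩
  have hXN := (FGMod.isSummand_iff_isRetract.mp hX).trans h
  exact ⟨X, FGMod.isSummand_iff_isRetract.mpr hXN, hind, hproj, rfl⟩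

theorem ITgen_eq_bot_of_subsingleton (M : FGMod R) [Subsingleton M] : ITgen R M = ⊥ := by
  rw [ITgen, AddSubgroup.closure_eq_bot_iff]
  rintro _ ⟨X, hX, hind, -, -⟩
  have : Nontrivial X := hind.1
  have : Nontrivial M := (FGMod.isSummand_iff_isRetract.mp hX).nontrivial
  exact absurd ‹Subsingleton M› (not_subsingleton M)

theorem FGMod.Indec.ITgen_fg {M : FGMod R} (hM : M.Indec) : (ITgen R M).FG := by
  refine (AddSubgroup.fg_iff _).mpr ⟨_, rfl, (Set.finite_singleton (ITcls R M)).subset ?_⟩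
  rintro _ ⟨X, hX, hind, -, rfl⟩
  obtain ⟨e⟩ := hX.nonempty_linearEquiv_of_indec hind.1 hM
  exact ITcls_congr e

variable [IsArtinianRing Rᵐᵒᵖ]

theorem ITgen_eq_sup {M A B : FGMod R} (e : M ≃ₗ[Rᵐᵒᵖ] A × B) :
    ITgen R M = ITgen R A ⊔ ITgen R B := by
  apply le_antisymm
  · refine (AddSubgroup.closure_le _).mpr ?_
    rintro _ ⟨X, hX, hind, hproj, rfl⟩
    have := hind.isLocalRing_end
    have hXAB := (FGMod.isSummand_iff_isRetract.mp hX).trans (.of_linearEquiv e)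
    rcases hXAB.of_prod with hXA | hXB
    · exact AddSubgroup.mem_sup_left <| AddSubgroup.subset_closure
        ⟨X, FGMod.isSummand_iff_isRetract.mpr hXA, hind, hproj, rfl⟩
    · exact AddSubgroup.mem_sup_right <| AddSubgroup.subset_closure
        ⟨X, FGMod.isSummand_iff_isRetract.mpr hXB, hind, hproj, rfl⟩
  · exact sup_le (ITgen_mono (IsRetract.prod_left.trans (.of_linearEquiv e.symm)))
      (ITgen_mono (IsRetract.prod_right.trans (.of_linearEquiv e.symm)))

theorem ITgen_fg (M : FGMod R) : (ITgen R M).FG := by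
  induction M using FGMod.induction_indec with
  | subsingleton M hM => exact ITgen_eq_bot_of_subsingleton M ▸ AddSubgroup.FG.bot
  | indec M hM => exact hM.ITgen_fg
  | prod M A B e hA hB => exact ITgen_eq_sup e ▸ hA.sup hB

theorem ITcls_mem_ITgen (M : FGMod R) : ITcls R M ∈ ITgen R M := by
  induction M using FGMod.induction_indec with
  | subsingleton M hM => exact ITcls_eq_zero_of_proj M.proj_of_subsingleton ▸ zero_mem _
  | indec M hM =>
    by_cases hproj : M.Proj
    · exact ITcls_eq_zero_of_proj hproj ▸ zero_mem _
    · exact AddSubgroup.subset_closure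
        ⟨M, FGMod.isSummand_iff_isRetract.mpr (.of_linearEquiv (.refl _ _)), hM, hproj, rfl⟩
  | prod M A B e hA hB =>
    rw [ITcls_eq_add e, ITgen_eq_sup e]
    exact add_mem (AddSubgroup.mem_sup_left hA) (AddSubgroup.mem_sup_right hB)

theorem map_ITgen_le_of_isSyzygy {OmK : AddMonoid.End (ITK R)} (hOm : IsSyzygyEnd R OmK)
    {M N : FGMod R} (hN : IsSyzygy M N) : (ITgen R M).map (OmK : ITK R →+ ITK R) ≤ ITgen R N := by
  refine AddSubgroup.map_le_iff_le_comap.mpr ?_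
  rw [ITgen, AddSubgroup.closure_le]
  rintro _ ⟨X, hX, -, -, rfl⟩
  obtain ⟨Y, hXY, hYN⟩ := hX.exists_isSyzygy hN
  change OmK (ITcls R X) ∈ ITgen R N
  rw [hOm X Y hXY]
  exact ITgen_mono (FGMod.isSummand_iff_isRetract.mp hYN) (ITcls_mem_ITgen Y)

end IgusaTodorovGroup

section Phi

variable {R} (OmK : AddMonoid.End (ITK R)) (M : FGMod R)

theorem rkIT_map_pow (H : AddSubgroup (ITK R)) (i : ℕ) :
    rkIT R (H.map ((OmK ^ i : AddMonoid.End (ITK R)) : ITK R →+ ITK R)) =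
      finrank ℤ ((AddSubgroup.toIntSubmodule H).map
        (addMonoidEndRingEquivInt (ITK R) OmK ^ i)) := by
  have : addMonoidEndRingEquivInt (ITK R) OmK ^ i = addMonoidEndRingEquivInt (ITK R) (OmK ^ i) :=
    (map_pow _ OmK i).symm
  rw [this]
  rfl

theorem phiIT_eq_sInf_rankStableFrom :
    phiIT R OmK M = sInf {n | RankStableFrom (addMonoidEndRingEquivInt (ITK R) OmK)
      (AddSubgroup.toIntSubmodule (ITgen R M)) n} := by
  simp only [phiIT, rkIT_map_pow, RankStableFrom]

variable {OmK M}

theorem phiIT_le_of_rankStableFrom {n : ℕ}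
    (h : RankStableFrom (addMonoidEndRingEquivInt (ITK R) OmK)
      (AddSubgroup.toIntSubmodule (ITgen R M)) n) : phiIT R OmK M ≤ n := by
  rw [phiIT_eq_sInf_rankStableFrom]
  exact Nat.sInf_le h

variable (OmK M) [IsArtinianRing Rᵐᵒᵖ]

instance isNoetherian_ITgen : IsNoetherian ℤ (AddSubgroup.toIntSubmodule (ITgen R M)) :=
  isNoetherian_of_fg_of_noetherian _ <| (Submodule.fg_iff_addSubgroup_fg _).mpr (ITgen_fg M)

theorem rankStableFrom_phiIT : RankStableFrom (addMonoidEndRingEquivInt (ITK R) OmK)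
    (AddSubgroup.toIntSubmodule (ITgen R M)) (phiIT R OmK M) := by
  rw [phiIT_eq_sInf_rankStableFrom]
  exact Nat.sInf_mem (exists_rankStableFrom _ _)

end Phi

/-- `φ(M) ≤ φ(ΩM) + 1`. -/
theorem phi_le_phi_syzygy_add_one (R : Type u) [Ring R] [IsArtinianRing Rᵐᵒᵖ]
    (OmK : AddMonoid.End (ITK R)) (hOm : IsSyzygyEnd R OmK)
    (M N : FGMod R) (hN : IsSyzygy M N) :
    phiIT R OmK M ≤ phiIT R OmK N + 1 :=
  phiIT_le_of_rankStableFrom <|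
    ((rankStableFrom_phiIT OmK N).anti (map_ITgen_le_of_isSyzygy hOm hN)).of_map
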